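/- Let α ∈ (1,2), let X be a real Banach space, let {T(t)}_{t>0} be a Riemann-Liouville α-order fractional cosine function on X, and let A be its generator. Then for every t > 0, T(t) maps D(A) into D(A), and T(t)Ax = A T(t)x for all x ∈ D(A). -/

import Mathlib

/-!
Everything follows once `T t` and `T s` commute for `t, s > 0`: then the bounded operator `T t` can
be pulled through the fractional integral defining the generator and through its limit.

For commutativity (`IsRLFracCosine.commute`), write the right-hand side of the functional equation
as a convolution over `(0, t] × (0, s]` of `(σ, τ) ↦ T σ (T τ x)` with the symmetric kernel
`k (u, v) = u ^ (1 - α) + v ^ (1 - α) - (u + v) ^ (1 - α)`. The left-hand side is symmetric in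
`t, s`, so the commutator `K (σ, τ) = T σ (T τ x) - T τ (T σ x)` satisfies `k ∗ K = 0` on the open
quadrant, and it remains to see that this forces `K = 0` (`eq_zero_of_cosKer_conv`).

* The kernel `k` is positive and homogeneous of degree `1 - α`. Hence integrating `k ∗ K` against
  `(R - a t - s)₊ ^ (n - 3 + α)` and exchanging the integrals gives, up to a positive constant,
  `∫ (R - a σ - τ)₊ ^ n • K (σ, τ)`, which therefore vanishes for all `a, R > 0` and `n ≥ 2`
  (`integral_ridge_smul_eq_zero`).
* Differentiating repeatedly in `a` produces powers of `σ`: all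
  `∫ ((R - a σ - τ)₊ ^ n * σ ^ j) • K (σ, τ)` vanish (`integral_ridge_moment_eq_zero`).
* At `a = 1` this says that `(R - σ - τ)₊ ^ 2 • K` is orthogonal to every polynomial, so it vanishes
  by the Stone-Weierstrass theorem (`ae_eq_zero_of_moments`), and `K = 0` by continuity.
-/


open MeasureTheory Filter Topology Set

/-- Riemann-Liouville fractional integral of order `β` of `f` at `t`:
`J_t^β f(t) = (1/Γ(β)) ∫_0^t (t-σ)^{β-1} f(σ) dσ`. -/
noncomputable def RLint {X : Type*} [NormedAddCommGroup X] [NormedSpace ℝ X]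
    (β t : ℝ) (f : ℝ → X) : X :=
  (Real.Gamma β)⁻¹ • ∫ σ in (0:ℝ)..t, (t - σ) ^ (β - 1) • f σ

/-- `{T(t)}_{t>0}` is a Riemann-Liouville `α`-order fractional cosine function. -/
def IsRLFracCosine {X : Type*} [NormedAddCommGroup X] [NormedSpace ℝ X]
    (α : ℝ) (T : ℝ → X →L[ℝ] X) : Prop :=
  (∀ x : X, ContinuousOn (fun t => T t x) (Set.Ioi (0:ℝ))) ∧
  (∀ x : X, Tendsto (fun t : ℝ => t ^ (2 - α) • T t x) (𝓝[>] (0:ℝ))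
      (𝓝 ((Real.Gamma (α - 1))⁻¹ • x))) ∧
  (∀ x : X, ∀ t > (0:ℝ), ∀ s > (0:ℝ),
    Real.Gamma (2 - α) • (∫ σ in (0:ℝ)..(t + s), T σ x) =
      (∫ σ in (0:ℝ)..t, ∫ τ in (0:ℝ)..s, (t - σ) ^ (1 - α) • T σ (T τ x)) +
      (∫ σ in (0:ℝ)..t, ∫ τ in (0:ℝ)..s, (s - τ) ^ (1 - α) • T σ (T τ x)) -
      (∫ σ in (0:ℝ)..t, ∫ τ in (0:ℝ)..s, (t + s - σ - τ) ^ (1 - α) • T σ (T τ x)))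

/-- `GenLimit α T x y` says `x ∈ D(A)` with `Ax = y`, for the generator `A` of
`{T(t)}_{t>0}`:  `y = lim_{t→0+} Γ(α+1) t^{-α} J_t^{2-α}(T(t)x − (t^{α-2}/Γ(α-1)) x)`. -/
def GenLimit {X : Type*} [NormedAddCommGroup X] [NormedSpace ℝ X]
    (α : ℝ) (T : ℝ → X →L[ℝ] X) (x y : X) : Prop :=
  Tendsto (fun t : ℝ => (Real.Gamma (α + 1) * t ^ (-α)) •
      RLint (2 - α) t (fun r => T r x - (r ^ (α - 2) / Real.Gamma (α - 1)) • x))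
    (𝓝[>] (0:ℝ)) (𝓝 y)


/-! ### The kernel of the functional equation -/

/-- The kernel `k (u, v) = u ^ (1 - α) + v ^ (1 - α) - (u + v) ^ (1 - α)` on the open quadrant,
extended by `0`. -/
noncomputable def cosKer (α : ℝ) : ℝ × ℝ → ℝ :=
  (Ioi (0:ℝ) ×ˢ Ioi (0:ℝ)).indicator
    fun q => q.1 ^ (1 - α) + q.2 ^ (1 - α) - (q.1 + q.2) ^ (1 - α)

lemma cosKer_of_pos {α : ℝ} {q : ℝ × ℝ} (h1 : 0 < q.1) (h2 : 0 < q.2) :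
    cosKer α q = q.1 ^ (1 - α) + q.2 ^ (1 - α) - (q.1 + q.2) ^ (1 - α) :=
  indicator_of_mem (show q ∈ Ioi (0:ℝ) ×ˢ Ioi (0:ℝ) from ⟨h1, h2⟩) _

lemma cosKer_of_not {α : ℝ} {q : ℝ × ℝ} (h : ¬ (0 < q.1 ∧ 0 < q.2)) :
    cosKer α q = 0 :=
  indicator_of_notMem (fun hq => h ⟨hq.1, hq.2⟩) _

lemma measurable_cosKer (α : ℝ) : Measurable (cosKer α) := by
  refine Measurable.indicator ?_ (measurableSet_Ioi.prod measurableSet_Ioi)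
  fun_prop

lemma cosKer_pos {α : ℝ} (hα : 1 < α) {q : ℝ × ℝ} (h1 : 0 < q.1) (h2 : 0 < q.2) :
    0 < cosKer α q := by
  rw [cosKer_of_pos h1 h2]
  have e1 : (q.1 + q.2) ^ (1 - α) ≤ q.1 ^ (1 - α) :=
    Real.rpow_le_rpow_of_nonpos h1 (by linarith) (by linarith)
  have e2 : 0 < q.2 ^ (1 - α) := Real.rpow_pos_of_pos h2 _
  linarith

lemma cosKer_nonneg {α : ℝ} (hα : 1 < α) (q : ℝ × ℝ) : 0 ≤ cosKer α q := by
  by_cases h : 0 < q.1 ∧ 0 < q.2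
  · exact (cosKer_pos hα h.1 h.2).le
  · exact (cosKer_of_not h).ge

lemma cosKer_smul {α r : ℝ} (hr : 0 < r) (q : ℝ × ℝ) :
    cosKer α (r • q) = r ^ (1 - α) * cosKer α q := by
  by_cases h : 0 < q.1 ∧ 0 < q.2
  · obtain ⟨h1, h2⟩ := h
    rw [cosKer_of_pos h1 h2, cosKer_of_pos (q := r • q) (by simpa using mul_pos hr h1)
      (by simpa using mul_pos hr h2)]
    simp only [Prod.smul_fst, Prod.smul_snd, smul_eq_mul]
    rw [← mul_add, Real.mul_rpow hr.le h1.le, Real.mul_rpow hr.le h2.le,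
      Real.mul_rpow hr.le (by linarith)]
    ring
  · rw [cosKer_of_not h, cosKer_of_not (q := r • q), mul_zero]
    simpa [hr] using h

lemma cosKer_swap {α : ℝ} (q : ℝ × ℝ) : cosKer α q.swap = cosKer α q := by
  by_cases h : 0 < q.1 ∧ 0 < q.2
  · rw [cosKer_of_pos h.1 h.2, cosKer_of_pos (q := q.swap) h.2 h.1]
    simp only [Prod.fst_swap, Prod.snd_swap]
    rw [add_comm q.2 q.1]; ring
  · rw [cosKer_of_not h, cosKer_of_not (q := q.swap)]
    exact fun h' => h ⟨h'.2, h'.1⟩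

lemma integrableOn_rpow_Ioc {p : ℝ} (hp : -1 < p) (N : ℝ) :
    IntegrableOn (fun u : ℝ => u ^ p) (Ioc 0 N) := by
  rcases le_total 0 N with h | h
  · exact (intervalIntegrable_iff_integrableOn_Ioc_of_le h).1
      (intervalIntegral.intervalIntegrable_rpow' hp)
  · simp [Ioc_eq_empty_of_le h]

lemma integrableOn_cosKer {α : ℝ} (hα : α ∈ Ioo (1:ℝ) 2) (N : ℝ) :
    IntegrableOn (cosKer α) (Ioc 0 N ×ˢ Ioc 0 N) := by
  have hp : -1 < 1 - α := by linarith [hα.2]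
  have h1 : IntegrableOn (fun u : ℝ => u ^ (1 - α)) (Ioc 0 N) := integrableOn_rpow_Ioc hp N
  have h0 : IntegrableOn (fun _ : ℝ => (1:ℝ)) (Ioc 0 N) := by simp
  have e1 := Integrable.mul_prod h1 h0
  have e2 := Integrable.mul_prod h0 h1
  rw [Measure.prod_restrict] at e1 e2
  refine Integrable.mono' (e1.add e2) (measurable_cosKer α).aestronglyMeasurable ?_
  refine (ae_restrict_iff' (measurableSet_Ioc.prod measurableSet_Ioc)).2 (ae_of_all _ ?_)
  rintro q ⟨⟨hq1, -⟩, ⟨hq2, -⟩⟩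
  rw [Real.norm_of_nonneg (cosKer_nonneg hα.1 q), cosKer_of_pos hq1 hq2]
  have : 0 ≤ (q.1 + q.2) ^ (1 - α) := Real.rpow_nonneg (by linarith) _
  simp only [Pi.add_apply, mul_one, one_mul]
  linarith

/-- The ridge function `q ↦ (r - a q₁ - q₂)₊ ^ γ`. -/
noncomputable def ridge (a γ r : ℝ) (q : ℝ × ℝ) : ℝ := max (r - a * q.1 - q.2) 0 ^ γ

lemma measurable_ridge (a γ r : ℝ) : Measurable (ridge a γ r) := by
  unfold ridge; fun_prop

lemma ridge_nonneg (a γ r : ℝ) (q : ℝ × ℝ) : 0 ≤ ridge a γ r q :=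
  Real.rpow_nonneg (le_max_right _ _) _

lemma ridge_of_le {a γ r : ℝ} (hγ : 0 < γ) {q : ℝ × ℝ} (h : r ≤ a * q.1 + q.2) :
    ridge a γ r q = 0 := by
  rw [ridge, max_eq_right (by linarith), Real.zero_rpow hγ.ne']

lemma ridge_le {a γ r : ℝ} (ha : 0 < a) (hγ : 0 < γ) {q : ℝ × ℝ} (hr : 0 ≤ r)
    (h1 : 0 ≤ q.1) (h2 : 0 ≤ q.2) :
    ridge a γ r q ≤ r ^ γ := by
  refine Real.rpow_le_rpow (le_max_right _ _) (max_le ?_ hr) hγ.le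
  have := mul_nonneg ha.le h1
  linarith

/-- The integral of the kernel against a ridge function depends on the height `r` through a power
only, by homogeneity of both factors. -/
lemma integral_cosKer_ridge {α a γ r : ℝ} (hr : 0 < r) :
    ∫ q, cosKer α q * ridge a γ r q = r ^ (γ + 3 - α) * ∫ q, cosKer α q * ridge a γ 1 q := by
  have h := Measure.integral_comp_smul (volume : Measure (ℝ × ℝ))
    (fun q => cosKer α q * ridge a γ r q) r
  have e : ∀ q : ℝ × ℝ, cosKer α (r • q) * ridge a γ r (r • q)
      = r ^ (1 - α + γ) * (cosKer α q * ridge a γ 1 q) := by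
    intro q
    rw [cosKer_smul hr, Real.rpow_add hr]
    have : ridge a γ r (r • q) = r ^ γ * ridge a γ 1 q := by
      rw [ridge, ridge, ← Real.mul_rpow hr.le (le_max_right _ _), mul_max_of_nonneg _ _ hr.le,
        mul_zero]
      simp only [Prod.smul_fst, Prod.smul_snd, smul_eq_mul]
      ring_nf
    rw [this]; ring
  simp only [e] at h
  rw [integral_const_mul] at h
  have hf : Module.finrank ℝ (ℝ × ℝ) = 2 := by simp
  rw [hf, abs_of_pos (by positivity), smul_eq_mul] at h
  have h3 : r ^ (γ + 3 - α) = r ^ 2 * r ^ (1 - α + γ) := by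
    rw [← Real.rpow_natCast, ← Real.rpow_add hr]; congr 1; push_cast; ring
  rw [h3, mul_assoc, h]
  field_simp

lemma integral_cosKer_ridge_pos {α a γ : ℝ} (hα : α ∈ Ioo (1:ℝ) 2) (ha : 0 < a) (hγ : 0 < γ) :
    0 < ∫ q, cosKer α q * ridge a γ 1 q := by
  set N : ℝ := max 1 (1 / a)
  have hsup : ∀ q : ℝ × ℝ, q ∉ Ioc 0 N ×ˢ Ioc 0 N → cosKer α q * ridge a γ 1 q = 0 := by
    intro q hq
    by_cases h : 0 < q.1 ∧ 0 < q.2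
    · rw [ridge_of_le hγ, mul_zero]
      by_contra! hlt
      refine hq ⟨⟨h.1, le_trans ?_ (le_max_right _ _)⟩, ⟨h.2, le_trans ?_ (le_max_left _ _)⟩⟩
      · rw [le_div_iff₀ ha]; nlinarith [h.2]
      · nlinarith [mul_pos ha h.1]
    · rw [cosKer_of_not h, zero_mul]
  have hint : Integrable (fun q => cosKer α q * ridge a γ 1 q) := by
    rw [← integrableOn_iff_integrable_of_support_subset (s := Ioc 0 N ×ˢ Ioc 0 N)
      (fun q hq => by by_contra hn; exact hq (hsup q hn))]
    refine Integrable.mono' (integrableOn_cosKer hα N)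
      ((measurable_cosKer α).mul (measurable_ridge a γ 1)).aestronglyMeasurable ?_
    refine (ae_restrict_iff' (measurableSet_Ioc.prod measurableSet_Ioc)).2 (ae_of_all _ ?_)
    rintro q ⟨⟨hq1, -⟩, ⟨hq2, -⟩⟩
    rw [Real.norm_of_nonneg (mul_nonneg (cosKer_nonneg hα.1 q) (ridge_nonneg _ _ _ _))]
    have := ridge_le (q := q) ha hγ zero_le_one hq1.le hq2.le
    rw [Real.one_rpow] at this
    exact mul_le_of_le_one_right (cosKer_nonneg hα.1 q) this
  rw [integral_pos_iff_support_of_nonneg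
    (fun q => mul_nonneg (cosKer_nonneg hα.1 q) (ridge_nonneg _ _ _ _)) hint]
  have hopen : IsOpen {q : ℝ × ℝ | 0 < q.1 ∧ 0 < q.2 ∧ a * q.1 + q.2 < 1} := by
    refine IsOpen.inter ?_ (IsOpen.inter ?_ ?_)
    · exact isOpen_lt continuous_const continuous_fst
    · exact isOpen_lt continuous_const continuous_snd
    · exact isOpen_lt ((continuous_const.mul continuous_fst).add continuous_snd) continuous_const
  have hne : {q : ℝ × ℝ | 0 < q.1 ∧ 0 < q.2 ∧ a * q.1 + q.2 < 1}.Nonempty := by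
    refine ⟨(1 / (3 * a), 1 / 3), by positivity, by norm_num, ?_⟩
    have : a * (1 / (3 * a)) = 1 / 3 := by field_simp
    simp only [this]; norm_num
  refine lt_of_lt_of_le (hopen.measure_pos volume hne) (measure_mono ?_)
  rintro q ⟨h1, h2, h3⟩
  refine (mul_pos (cosKer_pos hα.1 h1 h2) (Real.rpow_pos_of_pos ?_ _)).ne'
  exact lt_max_of_lt_left (by linarith)

/-! ### Uniqueness for the convolution equation on the quadrant -/

/-- The box `(0, N]²`. -/
def box (N : ℝ) : Set (ℝ × ℝ) := Ioc 0 N ×ˢ Ioc 0 N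

lemma measurableSet_box (N : ℝ) : MeasurableSet (box N) :=
  measurableSet_Ioc.prod measurableSet_Ioc

section Uniqueness

variable {X : Type*} [NormedAddCommGroup X] [NormedSpace ℝ X] [CompleteSpace X]

/-- A solution `K` of `k ∗ K = 0` is orthogonal to all ridge functions `(R - a σ - τ)₊ ^ n`. The
conditions on `N` put the support of the ridge function in the quadrant inside the box. -/
lemma integral_ridge_smul_eq_zero {α : ℝ} (hα : α ∈ Ioo (1:ℝ) 2) {K : ℝ × ℝ → X}
    (hi : ∀ N, IntegrableOn K (box N))
    (hE : ∀ t > (0:ℝ), ∀ s > (0:ℝ),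
      ∫ q in Ioc 0 t ×ˢ Ioc 0 s, cosKer α ((t, s) - q) • K q = 0)
    {a R N : ℝ} (ha : 0 < a) (hR : 0 < R) (haN : R < a * N) (hN : R < N) {n : ℕ} (hn : 2 ≤ n) :
    ∫ q in box N, (max (R - a * q.1 - q.2) 0 ^ n) • K q = 0 := by
  -- `γ` is chosen so that scaling turns the exponent `γ` into `γ + 3 - α = n`
  have hn' : (2:ℝ) ≤ n := by exact_mod_cast hn
  obtain ⟨γ, hγdef⟩ : ∃ γ : ℝ, γ = n - 3 + α := ⟨_, rfl⟩
  have hγ : 0 < γ := by linarith [hα.1]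
  have hN0 : 0 < N := hR.trans hN
  -- a point of the open quadrant at which the ridge function is nonzero lies in the box
  have hmem : ∀ q : ℝ × ℝ, 0 < q.1 → 0 < q.2 → a * q.1 + q.2 < R → q ∈ box N := by
    intro q h1 h2 h3
    refine ⟨⟨h1, ?_⟩, ⟨h2, ?_⟩⟩
    · have : a * q.1 < a * N := by linarith
      exact (lt_of_mul_lt_mul_left this ha.le).le
    · nlinarith [mul_pos ha h1]
  set w : ℝ × ℝ → ℝ := (box N).indicator (ridge a γ R) with hw
  have hwm : Measurable w := (measurable_ridge a γ R).indicator (measurableSet_box N)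
  have hwb : ∀ q, ‖w q‖ ≤ R ^ γ := by
    intro q
    by_cases hq : q ∈ box N
    · rw [hw, indicator_of_mem hq, Real.norm_of_nonneg (ridge_nonneg _ _ _ _)]
      exact ridge_le ha hγ hR.le hq.1.1.le hq.2.1.le
    · rw [hw, indicator_of_notMem hq, norm_zero]
      exact Real.rpow_nonneg hR.le _
  set kB : ℝ × ℝ → ℝ := (box N).indicator (cosKer α) with hkB
  set KB : ℝ × ℝ → X := (box N).indicator K with hKB
  have hkBi : Integrable kB :=
    (integrable_indicator_iff (measurableSet_box N)).2 (integrableOn_cosKer hα N)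
  have hKBi : Integrable KB := (integrable_indicator_iff (measurableSet_box N)).2 (hi N)
  have hG0 : Integrable (fun p : (ℝ × ℝ) × (ℝ × ℝ) => kB (p.1 - p.2) • KB p.2)
      (volume.prod volume) := by
    simpa using hKBi.convolution_integrand (ContinuousLinearMap.lsmul ℝ ℝ).flip hkBi
  have hG : Integrable (Function.uncurry fun p q : ℝ × ℝ => w p • kB (p - q) • KB q)
      (volume.prod volume) :=
    hG0.bdd_smul (φ := fun p : (ℝ × ℝ) × (ℝ × ℝ) => w p.1) (R ^ γ)
      (hwm.comp measurable_fst).aestronglyMeasurable (ae_of_all _ fun p => hwb p.1)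
  have hswap := integral_integral_swap hG
  -- the convolution equation kills the left-hand side
  have hleft : ∀ p : ℝ × ℝ, ∫ q, w p • kB (p - q) • KB q = 0 := by
    intro p
    rw [integral_smul]
    by_cases hp : p ∈ box N
    · have : ∫ q, kB (p - q) • KB q = ∫ q in Ioc 0 p.1 ×ˢ Ioc 0 p.2, cosKer α (p - q) • K q := by
        rw [← integral_indicator (measurableSet_Ioc.prod measurableSet_Ioc)]
        congr 1 with q
        by_cases hq : q ∈ Ioc 0 p.1 ×ˢ Ioc 0 p.2
        · rw [indicator_of_mem hq]
          have hqB : q ∈ box N :=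
            ⟨⟨hq.1.1, hq.1.2.trans hp.1.2⟩, ⟨hq.2.1, hq.2.2.trans hp.2.2⟩⟩
          rw [hKB, indicator_of_mem hqB]
          by_cases hpq : p - q ∈ box N
          · rw [hkB, indicator_of_mem hpq]
          · rw [hkB, indicator_of_notMem hpq, cosKer_of_not]
            rintro ⟨h1, h2⟩
            refine hpq ⟨⟨h1, ?_⟩, ⟨h2, ?_⟩⟩
            · have := hq.1.1; have := hp.1.2; simp only [Prod.fst_sub]; linarith
            · have := hq.2.1; have := hp.2.2; simp only [Prod.snd_sub]; linarith
        · rw [indicator_of_notMem hq]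
          by_cases hqB : q ∈ box N
          · rw [hkB, indicator_of_notMem, zero_smul]
            rintro ⟨⟨h1, -⟩, ⟨h2, -⟩⟩
            simp only [Prod.fst_sub, Prod.snd_sub] at h1 h2
            exact hq ⟨⟨hqB.1.1, by linarith⟩, ⟨hqB.2.1, by linarith⟩⟩
          · rw [hKB, indicator_of_notMem hqB, smul_zero]
      rw [this]
      have := hE p.1 hp.1.1 p.2 hp.2.1
      rw [Prod.mk.eta] at this
      rw [this, smul_zero]
    · rw [hw, indicator_of_notMem hp, zero_smul]
  simp only [hleft, integral_zero] at hswap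
  -- the inner integral on the right-hand side, by translation and scaling
  have hright : ∀ q : ℝ × ℝ, ∫ p, w p • kB (p - q) • KB q
      = (∫ u, cosKer α u * ridge a γ 1 u) •
        (box N).indicator (fun q : ℝ × ℝ => (max (R - a * q.1 - q.2) 0 ^ n) • K q) q := by
    intro q
    by_cases hq : q ∈ box N
    · rw [hKB, indicator_of_mem hq, indicator_of_mem hq]
      simp only [smul_smul]
      rw [integral_smul_const]
      congr 1
      rw [← integral_add_right_eq_self _ q]
      simp only [add_sub_cancel_right]
      have hpt : ∀ u : ℝ × ℝ, w (u + q) * kB u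
          = cosKer α u * ridge a γ (R - a * q.1 - q.2) u := by
        intro u
        have hr : ridge a γ (R - a * q.1 - q.2) u = ridge a γ R (u + q) := by
          rw [ridge, ridge]; simp only [Prod.fst_add, Prod.snd_add]; ring_nf
        rw [hr]
        by_cases hu : 0 < u.1 ∧ 0 < u.2
        · have q1 := hq.1.1
          have q2 := hq.2.1
          rcases lt_or_ge (a * (u + q).1 + (u + q).2) R with h | h
          · have m1 : u + q ∈ box N :=
              hmem _ (by simp only [Prod.fst_add]; linarith [hu.1])
                (by simp only [Prod.snd_add]; linarith [hu.2]) h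
            have m2 : u ∈ box N := by
              refine hmem _ hu.1 hu.2 ?_
              simp only [Prod.fst_add, Prod.snd_add] at h
              nlinarith [mul_pos ha q1]
            rw [hw, hkB, indicator_of_mem m1, indicator_of_mem m2, mul_comm]
          · rw [ridge_of_le hγ h, mul_zero, hw]
            by_cases m1 : u + q ∈ box N
            · rw [indicator_of_mem m1, ridge_of_le hγ h, zero_mul]
            · rw [indicator_of_notMem m1, zero_mul]
        · rw [cosKer_of_not hu, zero_mul, hkB, indicator_of_notMem, mul_zero]
          exact fun h => hu ⟨h.1.1, h.2.1⟩
      simp only [hpt]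
      rcases lt_or_ge 0 (R - a * q.1 - q.2) with h | h
      · rw [integral_cosKer_ridge h, max_eq_left h.le, mul_comm]
        congr 1
        rw [← Real.rpow_natCast]; congr 1; rw [hγdef]; ring
      · rw [max_eq_right h, zero_pow (by omega), mul_zero]
        refine integral_eq_zero_of_ae (ae_of_all _ fun u => ?_)
        by_cases hu : 0 < u.1 ∧ 0 < u.2
        · simp only [Pi.zero_apply]
          rw [ridge_of_le hγ, mul_zero]
          nlinarith [mul_pos ha hu.1, hu.2]
        · simp [cosKer_of_not hu]
    · rw [hKB, indicator_of_notMem hq, indicator_of_notMem hq]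
      simp
  simp only [hright] at hswap
  rw [integral_smul, integral_indicator (measurableSet_box N)] at hswap
  exact (smul_eq_zero.1 hswap.symm).resolve_left (integral_cosKer_ridge_pos hα ha hγ).ne'

lemma hasDerivAt_posPart_pow (n : ℕ) (hn : 1 ≤ n) (z : ℝ) :
    HasDerivAt (fun z : ℝ => max z 0 ^ (n + 1)) ((n + 1) * max z 0 ^ n) z := by
  rcases lt_trichotomy z 0 with h | h | h
  · rw [max_eq_right h.le, zero_pow (by omega), mul_zero]
    refine (hasDerivAt_const z (0:ℝ)).congr_of_eventuallyEq ?_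
    filter_upwards [Iio_mem_nhds h] with y hy
    rw [max_eq_right (le_of_lt hy), zero_pow (by omega)]
  · subst h
    rw [max_self, zero_pow (by omega), mul_zero]
    rw [hasDerivAt_iff_isLittleO_nhds_zero]
    simp only [zero_add, max_self, smul_zero, sub_zero, zero_pow (Nat.succ_ne_zero n)]
    have h1 : (fun h : ℝ => h ^ (n + 1)) =o[𝓝 0] fun h : ℝ => h := by
      simpa using Asymptotics.isLittleO_pow_pow (𝕜 := ℝ) (m := 1) (n := n + 1) (by omega)
    refine Asymptotics.IsBigO.trans_isLittleO (Asymptotics.IsBigO.of_bound 1 ?_) h1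
    refine Eventually.of_forall fun h => ?_
    rw [one_mul, norm_pow, norm_pow]
    refine pow_le_pow_left₀ (norm_nonneg _) ?_ _
    rw [Real.norm_of_nonneg (le_max_right _ _)]
    exact max_le (le_abs_self h) (abs_nonneg h)
  · rw [max_eq_left h.le]
    have := hasDerivAt_pow (n + 1) z
    simp only [Nat.add_sub_cancel, Nat.cast_add, Nat.cast_one] at this
    refine this.congr_of_eventuallyEq ?_
    filter_upwards [Ioi_mem_nhds h] with y hy
    rw [max_eq_left (le_of_lt hy)]

/-- Each differentiation in `a` of the vanishing integrals brings down one more factor `σ`. -/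
lemma integral_ridge_moment_eq_zero {α : ℝ} (hα : α ∈ Ioo (1:ℝ) 2) {K : ℝ × ℝ → X}
    (hi : ∀ N, IntegrableOn K (box N))
    (hE : ∀ t > (0:ℝ), ∀ s > (0:ℝ),
      ∫ q in Ioc 0 t ×ˢ Ioc 0 s, cosKer α ((t, s) - q) • K q = 0)
    {R N : ℝ} (hR : 0 < R) (hN : R < N) (j : ℕ) :
    ∀ a : ℝ, 0 < a → R < a * N → ∀ n : ℕ, 2 ≤ n →
    ∫ q in box N, (max (R - a * q.1 - q.2) 0 ^ n * q.1 ^ j) • K q = 0 := by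
  induction j with
  | zero =>
    intro a ha haN n hn
    simpa using integral_ridge_smul_eq_zero hα hi hE ha hR haN hN hn
  | succ j ih =>
    intro a ha haN n hn
    have hN0 : 0 < N := hR.trans hN
    set U : Set ℝ := {b | 0 < b ∧ R < b * N} with hU
    have hUo : IsOpen U :=
      (isOpen_lt continuous_const continuous_id).inter
        (isOpen_lt continuous_const (continuous_id.mul continuous_const))
    have haU : U ∈ 𝓝 a := hUo.mem_nhds ⟨ha, haN⟩
    have hmeas : ∀ (b : ℝ) (m i : ℕ), AEStronglyMeasurable
        (fun q : ℝ × ℝ => (max (R - b * q.1 - q.2) 0 ^ m * q.1 ^ i) • K q)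
        (volume.restrict (box N)) := fun b m i =>
      AEStronglyMeasurable.smul (by fun_prop) (hi N).aestronglyMeasurable
    have hbd : ∀ (b : ℝ), 0 < b → ∀ (m i : ℕ), ∀ q ∈ box N,
        ‖(max (R - b * q.1 - q.2) 0 ^ m * q.1 ^ i) • K q‖ ≤ (R ^ m * N ^ i) * ‖K q‖ := by
      intro b hb m i q hq
      rw [norm_smul]
      refine mul_le_mul_of_nonneg_right ?_ (norm_nonneg _)
      have h1 := hq.1.1
      have h2 := hq.2.1
      rw [Real.norm_of_nonneg (by positivity)]
      refine mul_le_mul (pow_le_pow_left₀ (le_max_right _ _) (max_le ?_ hR.le) _)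
        (pow_le_pow_left₀ h1.le hq.1.2 _) (by positivity) (by positivity)
      nlinarith [mul_pos hb h1]
    have hint : ∀ (m i : ℕ), Integrable
        (fun q : ℝ × ℝ => (max (R - a * q.1 - q.2) 0 ^ m * q.1 ^ i) • K q)
        (volume.restrict (box N)) := fun m i =>
      Integrable.mono' ((hi N).norm.const_mul (R ^ m * N ^ i)) (hmeas a m i)
        ((ae_restrict_iff' (measurableSet_box N)).2 (ae_of_all _ (hbd a ha m i)))
    have key := (hasDerivAt_integral_of_dominated_loc_of_deriv_le
      (μ := volume.restrict (box N))
      (F := fun b q => (max (R - b * q.1 - q.2) 0 ^ (n + 1) * q.1 ^ j) • K q)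
      (F' := fun b q => (-(n + 1 : ℝ)) • (max (R - b * q.1 - q.2) 0 ^ n * q.1 ^ (j + 1)) • K q)
      (bound := fun q => (n + 1 : ℝ) * ((R ^ n * N ^ (j + 1)) * ‖K q‖))
      haU (Eventually.of_forall fun b => hmeas b _ _) (hint _ _)
      ((hmeas a _ _).const_smul _) ?_ (((hi N).norm.const_mul _).const_mul _) ?_).2
    · have hz : (fun b : ℝ => ∫ q in box N,
          (max (R - b * q.1 - q.2) 0 ^ (n + 1) * q.1 ^ j) • K q) =ᶠ[𝓝 a] fun _ => 0 := by
        filter_upwards [haU] with b hb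
        exact ih b hb.1 hb.2 (n + 1) (by omega)
      have h0 := key.unique ((hasDerivAt_const a (0 : X)).congr_of_eventuallyEq hz)
      rw [integral_smul] at h0
      refine (smul_eq_zero.1 h0).resolve_left ?_
      have : (0:ℝ) < n + 1 := by positivity
      linarith
    · refine (ae_restrict_iff' (measurableSet_box N)).2 (ae_of_all _ fun q hq b hb => ?_)
      rw [norm_smul, norm_neg, Real.norm_of_nonneg (by positivity)]
      exact mul_le_mul_of_nonneg_left (hbd b hb.1 n (j + 1) q hq) (by positivity)
    · refine ae_of_all _ fun q b _ => ?_
      have h1 : HasDerivAt (fun b : ℝ => R - b * q.1 - q.2) (-q.1) b := by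
        simpa using (((hasDerivAt_id b).mul_const q.1).const_sub R).sub_const q.2
      have h2 := (hasDerivAt_posPart_pow n (by omega) (R - b * q.1 - q.2)).comp b h1
      have h3 := (h2.mul_const (q.1 ^ j)).smul_const (K q)
      convert! h3 using 1
      rw [smul_smul]; congr 1; ring

/-- An integrable function on the box is determined by its moments. The polynomials in
`R - σ - τ` and `σ` separate points, hence are dense in the continuous functions on `[0, N]²`. -/
lemma ae_eq_zero_of_moments {F : ℝ × ℝ → X} {R N : ℝ}
    (hF : IntegrableOn F (box N))
    (hm : ∀ m j : ℕ, ∫ q in box N, ((R - q.1 - q.2) ^ m * q.1 ^ j) • F q = 0) :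
    ∀ᵐ q ∂(volume.restrict (box N)), F q = 0 := by
  set D : Set (ℝ × ℝ) := Icc 0 N ×ˢ Icc 0 N with hD
  have hDc : IsCompact D := isCompact_Icc.prod isCompact_Icc
  have : CompactSpace D := isCompact_iff_compactSpace.1 hDc
  have hBD : box N ⊆ D := prod_mono Ioc_subset_Icc_self Ioc_subset_Icc_self
  set x0 : C(D, ℝ) := ⟨fun q => R - q.1.1 - q.1.2, by fun_prop⟩ with hx0
  set x1 : C(D, ℝ) := ⟨fun q => q.1.1, by fun_prop⟩ with hx1
  set A : Subalgebra ℝ C(D, ℝ) := Algebra.adjoin ℝ {x0, x1} with hA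
  have hsep : A.SeparatesPoints := by
    intro p q hpq
    by_cases h : p.1.1 = q.1.1
    · refine ⟨x0, ⟨x0, Algebra.subset_adjoin (by simp), rfl⟩, ?_⟩
      intro h'
      apply hpq
      have h'' : R - p.1.1 - p.1.2 = R - q.1.1 - q.1.2 := h'
      exact Subtype.ext (Prod.ext h (by linarith))
    · exact ⟨x1, ⟨x1, Algebra.subset_adjoin (by simp), rfl⟩, h⟩
  have htop := ContinuousMap.subalgebra_topologicalClosure_eq_top_of_separatesPoints A hsep
  set μD : Measure D := Measure.comap Subtype.val (volume.restrict (box N)) with hμD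
  have hDm : MeasurableSet D := measurableSet_Icc.prod measurableSet_Icc
  have hrestr : (volume.restrict (box N)).restrict D = volume.restrict (box N) :=
    Measure.restrict_eq_self_of_ae_mem
      ((ae_restrict_iff' (measurableSet_box N)).2 (ae_of_all _ hBD))
  have hFD : Integrable (fun q : D => F q.1) μD := by
    have : IntegrableOn F D (volume.restrict (box N)) := by
      rw [IntegrableOn, hrestr]; exact hF
    exact (integrableOn_iff_comap_subtypeVal hDm).1 this
  have hbnd : ∀ (f : C(D, ℝ)) (q : D), ‖f q‖ ≤ ‖f‖ := fun f q => f.norm_coe_le_norm q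
  have hsm : ∀ f : C(D, ℝ), Integrable (fun q : D => f q • F q.1) μD := fun f =>
    hFD.bdd_smul (φ := f) ‖f‖ f.continuous.measurable.aestronglyMeasurable
      (ae_of_all _ (hbnd f))
  let L0 : C(D, ℝ) →ₗ[ℝ] X :=
    { toFun := fun f => ∫ q : D, f q • F q.1 ∂μD
      map_add' := fun f g => by
        simp only [ContinuousMap.add_apply, add_smul]
        exact integral_add (hsm f) (hsm g)
      map_smul' := fun c f => by
        simp only [ContinuousMap.smul_apply, smul_assoc, RingHom.id_apply]
        exact integral_smul c _ }
  let L : C(D, ℝ) →L[ℝ] X := L0.mkContinuous (∫ q : D, ‖F q.1‖ ∂μD) (fun f => by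
    refine (norm_integral_le_integral_norm _).trans ?_
    rw [mul_comm, ← integral_const_mul]
    refine integral_mono (hsm f).norm (hFD.norm.const_mul _) fun q => ?_
    simp only [norm_smul]
    exact mul_le_mul_of_nonneg_right (hbnd f q) (norm_nonneg _))
  have hL : ∀ g : ℝ × ℝ → ℝ, ∀ f : C(D, ℝ), (∀ q : D, f q = g q.1) →
      L f = ∫ q in box N, g q • F q := by
    intro g f hfg
    have h1 : L f = ∫ q : D, g q.1 • F q.1 ∂μD := by
      change ∫ q : D, f q • F q.1 ∂μD = _
      simp only [hfg]
    rw [h1, hμD, integral_subtype_comap hDm (fun q => g q • F q), hrestr]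
  have hker : Subalgebra.toSubmodule A ≤ L.ker := by
    rw [hA, Algebra.adjoin_eq_span, Submodule.span_le]
    intro f hf
    obtain ⟨m, j, rfl⟩ := (Submonoid.mem_closure_pair _ _ _).1 hf
    change L _ = 0
    rw [hL (fun q => (R - q.1 - q.2) ^ m * q.1 ^ j) _ (fun q => by simp [hx0, hx1])]
    exact hm m j
  have hzero : ∀ f : C(D, ℝ), L f = 0 := by
    intro f
    have hf : f ∈ A.topologicalClosure := by rw [htop]; trivial
    have hcl : IsClosed {f : C(D, ℝ) | L f = 0} := isClosed_eq L.continuous continuous_const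
    exact hcl.closure_subset_iff.2 (fun f hf => hker hf) hf
  have hall : ∀ g : ℝ × ℝ → ℝ, Continuous g → ∫ q in box N, g q • F q = 0 := by
    intro g hg
    rw [← hL g ⟨fun q => g q.1, hg.comp continuous_subtype_val⟩ (fun q => rfl)]
    exact hzero _
  have hF' : Integrable ((box N).indicator F) :=
    (integrable_indicator_iff (measurableSet_box N)).2 hF
  have h0 := ae_eq_zero_of_integral_contDiff_smul_eq_zero hF'.locallyIntegrable (by
    intro g hg _
    have := hall g hg.continuous
    rw [← integral_indicator (measurableSet_box N)] at this
    simpa [indicator_smul] using this)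
  refine (ae_restrict_iff' (measurableSet_box N)).2 ?_
  filter_upwards [h0] with q hq hqB
  rwa [indicator_of_mem hqB] at hq

/-- The convolution equation `k ∗ K = 0` on the open quadrant has only the zero solution. -/
theorem eq_zero_of_cosKer_conv {α : ℝ} (hα : α ∈ Ioo (1:ℝ) 2) {K : ℝ × ℝ → X}
    (hc : ContinuousOn K (Ioi 0 ×ˢ Ioi 0)) (hi : ∀ N, IntegrableOn K (box N))
    (hE : ∀ t > (0:ℝ), ∀ s > (0:ℝ),
      ∫ q in Ioc 0 t ×ˢ Ioc 0 s, cosKer α ((t, s) - q) • K q = 0)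
    {t s : ℝ} (ht : 0 < t) (hs : 0 < s) : K (t, s) = 0 := by
  obtain ⟨R, hRdef⟩ : ∃ R : ℝ, R = t + s + 1 := ⟨_, rfl⟩
  obtain ⟨N, hNdef⟩ : ∃ N : ℝ, N = R + 1 := ⟨_, rfl⟩
  have hR : 0 < R := by linarith
  have hN : R < N := by linarith
  have hFi : IntegrableOn (fun q : ℝ × ℝ => (max (R - q.1 - q.2) 0 ^ 2) • K q) (box N) := by
    refine (hi N).bdd_smul (φ := fun q : ℝ × ℝ => max (R - q.1 - q.2) 0 ^ 2) (R ^ 2)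
      (by fun_prop) ((ae_restrict_iff' (measurableSet_box N)).2 (ae_of_all _ fun q hq => ?_))
    rw [Real.norm_of_nonneg (by positivity)]
    have h1 := hq.1.1
    have h2 := hq.2.1
    exact pow_le_pow_left₀ (le_max_right _ _) (max_le (by linarith) hR.le) _
  have hae := ae_eq_zero_of_moments (R := R) hFi (fun m j => by
    have := integral_ridge_moment_eq_zero hα hi hE hR hN j 1 one_pos (by linarith)
      (m + 2) (by omega)
    rw [← this]
    congr 1 with q
    rw [smul_smul]
    congr 1
    rw [one_mul, pow_add]
    rcases le_total (R - q.1 - q.2) 0 with h | h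
    · rw [max_eq_right h]; simp
    · rw [max_eq_left h]; ring)
  set U : Set (ℝ × ℝ) := {q | 0 < q.1 ∧ 0 < q.2 ∧ q.1 + q.2 < R} with hU
  have hUo : IsOpen U :=
    (isOpen_lt continuous_const continuous_fst).inter
      ((isOpen_lt continuous_const continuous_snd).inter
        (isOpen_lt (continuous_fst.add continuous_snd) continuous_const))
  have hUB : U ⊆ box N := fun q hq =>
    ⟨⟨hq.1, by linarith [hq.2.1, hq.2.2]⟩, ⟨hq.2.1, by linarith [hq.1, hq.2.2]⟩⟩
  have hKU : K =ᵐ[volume.restrict U] fun _ => (0 : X) := by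
    refine (ae_restrict_iff' hUo.measurableSet).2 ?_
    filter_upwards [(ae_restrict_iff' (measurableSet_box N)).1 hae] with q hq hqU
    refine (smul_eq_zero.1 (hq (hUB hqU))).resolve_left ?_
    have : 0 < max (R - q.1 - q.2) 0 := lt_max_of_lt_left (by linarith [hqU.2.2])
    positivity
  exact Measure.eqOn_open_of_ae_eq hKU hUo (hc.mono fun q hq => ⟨hq.1, hq.2.1⟩)
    continuousOn_const (show (t, s) ∈ U from ⟨ht, hs, by simp only; linarith⟩)

end Uniqueness

/-! ### Commutativity of the cosine family -/

section Cosine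

variable {X : Type*} [NormedAddCommGroup X] [NormedSpace ℝ X] [CompleteSpace X]

/-- By the uniform boundedness principle, the behaviour at `0` prescribed pointwise holds as a bound
in operator norm. -/
lemma IsRLFracCosine.exists_bound {α : ℝ} {T : ℝ → X →L[ℝ] X} (hT : IsRLFracCosine α T) (R : ℝ) :
    ∃ M : ℝ, 0 ≤ M ∧ ∀ t ∈ Ioc 0 R, ‖T t‖ ≤ M * t ^ (α - 2) := by
  obtain ⟨hc, hl, -⟩ := hT
  have hpt : ∀ x : X, ∃ C, ∀ t : Ioc 0 R, ‖((t : ℝ) ^ (2 - α) • T t) x‖ ≤ C := by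
    intro x
    have hb := (hl x).norm.isBoundedUnder_le
    obtain ⟨C1, hC1⟩ := hb
    rw [eventually_map, eventually_nhdsWithin_iff, Metric.eventually_nhds_iff] at hC1
    obtain ⟨δ, hδ, hC1⟩ := hC1
    have hcont : ContinuousOn (fun t : ℝ => t ^ (2 - α) • T t x) (Icc (δ / 2) R) := by
      have hsub : Icc (δ / 2) R ⊆ Ioi 0 := fun t ht => lt_of_lt_of_le (by linarith) ht.1
      refine ContinuousOn.smul ?_ ((hc x).mono hsub)
      exact fun t ht => (Real.continuousAt_rpow_const t _
        (Or.inl (hsub ht).ne')).continuousWithinAt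
    obtain ⟨C2, hC2⟩ := isCompact_Icc.exists_bound_of_continuousOn hcont
    refine ⟨max C1 C2, fun t => ?_⟩
    rcases lt_or_ge (t : ℝ) (δ / 2) with h | h
    · refine le_trans (hC1 ?_ t.2.1) (le_max_left _ _)
      rw [Real.dist_eq, sub_zero, abs_of_pos t.2.1]; linarith
    · exact le_trans (hC2 t ⟨h, t.2.2⟩) (le_max_right _ _)
  obtain ⟨M, hM⟩ := banach_steinhaus hpt
  refine ⟨max M 0, le_max_right _ _, fun t ht => ?_⟩
  have h := hM ⟨t, ht⟩
  simp only [norm_smul] at h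
  have hp : 0 < t ^ (2 - α) := Real.rpow_pos_of_pos ht.1 _
  rw [Real.norm_of_nonneg hp.le] at h
  have he : t ^ (α - 2) = (t ^ (2 - α))⁻¹ := by
    rw [← Real.rpow_neg ht.1.le]; congr 1; ring
  rw [he, ← div_eq_mul_inv, le_div_iff₀ hp, mul_comm]
  exact h.trans (le_max_left _ _)

lemma IsRLFracCosine.continuousOn_comp {α : ℝ} {T : ℝ → X →L[ℝ] X} (hT : IsRLFracCosine α T)
    (x : X) : ContinuousOn (fun q : ℝ × ℝ => T q.1 (T q.2 x)) (Ioi 0 ×ˢ Ioi 0) := by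
  rintro ⟨a, b⟩ ⟨ha, hb⟩
  simp only [mem_Ioi] at ha hb
  refine ContinuousAt.continuousWithinAt ?_
  have hTa : ∀ y : X, ContinuousAt (fun q : ℝ × ℝ => T q.1 y) (a, b) := fun y =>
    ContinuousAt.comp (g := fun u => T u y) (f := Prod.fst) (x := (a, b))
      ((hT.1 y).continuousAt (Ioi_mem_nhds ha)) continuousAt_fst
  have hTb : ContinuousAt (fun q : ℝ × ℝ => T q.2 x) (a, b) :=
    ContinuousAt.comp (g := fun u => T u x) (f := Prod.snd) (x := (a, b))
      ((hT.1 x).continuousAt (Ioi_mem_nhds hb)) continuousAt_snd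
  obtain ⟨M, hM0, hM⟩ := hT.exists_bound (a + 1)
  set C : ℝ := M * ((a / 2) ^ (α - 2) + (a + 1) ^ (α - 2)) with hC
  have hbd : ∀ᶠ q : ℝ × ℝ in 𝓝 (a, b), ‖T q.1‖ ≤ C := by
    have h1 : ∀ᶠ s in 𝓝 a, s ∈ Ioo (a / 2) (a + 1) :=
      Ioo_mem_nhds (by linarith) (by linarith)
    filter_upwards [(continuousAt_fst (p := (a, b))).eventually h1] with q hq
    have hq0 : 0 < q.1 := by linarith [hq.1]
    refine (hM q.1 ⟨hq0, hq.2.le⟩).trans (mul_le_mul_of_nonneg_left ?_ hM0)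
    rcases le_total (α - 2) 0 with h | h
    · have := Real.rpow_le_rpow_of_nonpos (by linarith) hq.1.le h
      have := Real.rpow_nonneg (x := a + 1) (by linarith) (α - 2)
      linarith
    · have := Real.rpow_le_rpow hq0.le hq.2.le h
      have := Real.rpow_nonneg (x := a / 2) (by linarith) (α - 2)
      linarith
  have hz : Tendsto (fun q : ℝ × ℝ => T q.1 (T q.2 x - T b x)) (𝓝 (a, b)) (𝓝 0) := by
    have h1 : Tendsto (fun q : ℝ × ℝ => C * ‖T q.2 x - T b x‖) (𝓝 (a, b)) (𝓝 0) := by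
      have : Tendsto (fun q : ℝ × ℝ => T q.2 x - T b x) (𝓝 (a, b)) (𝓝 0) := by
        simpa using hTb.tendsto.sub_const (T b x)
      simpa using this.norm.const_mul C
    refine squeeze_zero_norm' ?_ h1
    filter_upwards [hbd] with q hq
    exact (T q.1).le_of_opNorm_le hq _
  have := hz.add (hTa (T b x)).tendsto
  simpa [ContinuousAt] using this

lemma integrableOn_beta {α : ℝ} (hα : α ∈ Ioo (1:ℝ) 2) {t : ℝ} (ht : 0 < t) :
    IntegrableOn (fun u : ℝ => (t - u) ^ (1 - α) * u ^ (α - 2)) (Ioc 0 t) := by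
  have h1 : IntegrableOn (fun u : ℝ => u ^ (α - 2)) (Ioc 0 t) :=
    integrableOn_rpow_Ioc (by linarith [hα.1]) t
  have h2 : IntegrableOn (fun u : ℝ => (t - u) ^ (1 - α)) (Ioc 0 t) := by
    have h : IntervalIntegrable (fun u : ℝ => u ^ (1 - α)) volume 0 t :=
      intervalIntegral.intervalIntegrable_rpow' (by linarith [hα.2])
    have h' := (h.comp_sub_left t).symm
    rw [sub_self, sub_zero] at h'
    exact (intervalIntegrable_iff_integrableOn_Ioc_of_le ht.le).1 h'
  refine Integrable.mono' ((h1.const_mul ((t / 2) ^ (1 - α))).add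
    (h2.const_mul ((t / 2) ^ (α - 2)))) (by fun_prop) ?_
  refine (ae_restrict_iff' measurableSet_Ioc).2 (ae_of_all _ fun u hu => ?_)
  have p1 : 0 ≤ (t - u) ^ (1 - α) := Real.rpow_nonneg (by linarith [hu.2]) _
  have p2 : 0 ≤ u ^ (α - 2) := Real.rpow_nonneg hu.1.le _
  have p3 : 0 ≤ (t / 2) ^ (1 - α) := Real.rpow_nonneg (by linarith) _
  have p4 : 0 ≤ (t / 2) ^ (α - 2) := Real.rpow_nonneg (by linarith) _
  rw [Real.norm_of_nonneg (mul_nonneg p1 p2)]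
  simp only [Pi.add_apply]
  -- one of the two factors stays away from its singularity
  rcases le_total u (t / 2) with h | h
  · have : (t - u) ^ (1 - α) ≤ (t / 2) ^ (1 - α) :=
      Real.rpow_le_rpow_of_nonpos (by linarith) (by linarith) (by linarith [hα.1])
    nlinarith [mul_le_mul_of_nonneg_right this p2, mul_nonneg p4 p1]
  · have : u ^ (α - 2) ≤ (t / 2) ^ (α - 2) :=
      Real.rpow_le_rpow_of_nonpos (by linarith) h (by linarith [hα.2])
    nlinarith [mul_le_mul_of_nonneg_left this p1, mul_nonneg p3 p2]

lemma IsRLFracCosine.integrableOn_smul_comp {α : ℝ} {T : ℝ → X →L[ℝ] X}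
    (hT : IsRLFracCosine α T) (x : X) {t s : ℝ} {g b : ℝ × ℝ → ℝ} (hg : Measurable g)
    (hb : IntegrableOn (fun q => b q * (q.1 ^ (α - 2) * q.2 ^ (α - 2))) (Ioc 0 t ×ˢ Ioc 0 s))
    (hgb : ∀ q ∈ Ioc 0 t ×ˢ Ioc 0 s, |g q| ≤ b q) :
    IntegrableOn (fun q : ℝ × ℝ => g q • T q.1 (T q.2 x)) (Ioc 0 t ×ˢ Ioc 0 s) := by
  have hms : MeasurableSet (Ioc 0 t ×ˢ Ioc 0 s) := measurableSet_Ioc.prod measurableSet_Ioc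
  obtain ⟨M, hM0, hM⟩ := hT.exists_bound t
  obtain ⟨M', hM0', hM'⟩ := hT.exists_bound s
  refine Integrable.mono' (hb.const_mul (M * M' * ‖x‖)) ?_ ?_
  · refine hg.aestronglyMeasurable.smul
      (((hT.continuousOn_comp x).mono ?_).aestronglyMeasurable hms)
    exact prod_mono Ioc_subset_Ioi_self Ioc_subset_Ioi_self
  · refine (ae_restrict_iff' hms).2 (ae_of_all _ fun q hq => ?_)
    rw [norm_smul, Real.norm_eq_abs]
    have h1 : 0 ≤ q.1 ^ (α - 2) := Real.rpow_nonneg hq.1.1.le _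
    have h2 : 0 ≤ q.2 ^ (α - 2) := Real.rpow_nonneg hq.2.1.le _
    have e2 : ‖T q.2 x‖ ≤ M' * q.2 ^ (α - 2) * ‖x‖ := (T q.2).le_of_opNorm_le (hM' _ hq.2) x
    have e1 : ‖T q.1 (T q.2 x)‖ ≤ M * q.1 ^ (α - 2) * (M' * q.2 ^ (α - 2) * ‖x‖) :=
      ((T q.1).le_of_opNorm_le (hM _ hq.1) _).trans
        (mul_le_mul_of_nonneg_left e2 (mul_nonneg hM0 h1))
    calc |g q| * ‖T q.1 (T q.2 x)‖
        ≤ b q * (M * q.1 ^ (α - 2) * (M' * q.2 ^ (α - 2) * ‖x‖)) :=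
          mul_le_mul (hgb q hq) e1 (norm_nonneg _) ((abs_nonneg _).trans (hgb q hq))
      _ = M * M' * ‖x‖ * (b q * (q.1 ^ (α - 2) * q.2 ^ (α - 2))) := by ring

lemma integrableOn_kernel_bound {α : ℝ} (hα : α ∈ Ioo (1:ℝ) 2) {t s : ℝ} (ht : 0 < t)
    (hs : 0 < s) :
    IntegrableOn (fun q : ℝ × ℝ => ((t - q.1) ^ (1 - α) + (s - q.2) ^ (1 - α)) *
      (q.1 ^ (α - 2) * q.2 ^ (α - 2))) (Ioc 0 t ×ˢ Ioc 0 s) := by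
  have h : ∀ r, IntegrableOn (fun u : ℝ => u ^ (α - 2)) (Ioc 0 r) :=
    integrableOn_rpow_Ioc (by linarith [hα.1])
  have e1 := Integrable.mul_prod (integrableOn_beta hα ht) (h s)
  have e2 := Integrable.mul_prod (h t) (integrableOn_beta hα hs)
  rw [Measure.prod_restrict] at e1 e2
  refine (e1.add e2).congr (ae_of_all _ fun q => ?_)
  simp only [Pi.add_apply]
  ring

lemma IsRLFracCosine.integrableOn_comp {α : ℝ} (hα : α ∈ Ioo (1:ℝ) 2) {T : ℝ → X →L[ℝ] X}
    (hT : IsRLFracCosine α T) (x : X) (t s : ℝ) :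
    IntegrableOn (fun q : ℝ × ℝ => T q.1 (T q.2 x)) (Ioc 0 t ×ˢ Ioc 0 s) := by
  have h : ∀ r, IntegrableOn (fun u : ℝ => u ^ (α - 2)) (Ioc 0 r) :=
    integrableOn_rpow_Ioc (by linarith [hα.1])
  have e1 := Integrable.mul_prod (h t) (h s)
  rw [Measure.prod_restrict] at e1
  simpa using hT.integrableOn_smul_comp x (g := fun _ => 1) (b := fun _ => 1) (t := t) (s := s)
    measurable_const (by simp only [one_mul]; exact e1) (by simp)

/-- The junk value `0 ^ (1 - α) = 0` makes the formula for the kernel valid on the edges `σ = t` and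
`τ = s` as well. -/
lemma cosKer_sub {α : ℝ} (hα : 1 < α) {t s : ℝ} {q : ℝ × ℝ} (hq : q ∈ Ioc 0 t ×ˢ Ioc 0 s) :
    cosKer α ((t, s) - q)
      = (t - q.1) ^ (1 - α) + (s - q.2) ^ (1 - α) - (t + s - q.1 - q.2) ^ (1 - α) := by
  have e : t + s - q.1 - q.2 = (t - q.1) + (s - q.2) := by ring
  have h0 : (0:ℝ) ^ (1 - α) = 0 := Real.zero_rpow (by linarith)
  rw [e]
  rcases hq.1.2.eq_or_lt with h1 | h1
  · rw [cosKer_of_not (by simp [h1]), h1]; simp [h0]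
  rcases hq.2.2.eq_or_lt with h2 | h2
  · rw [cosKer_of_not (by simp [h2]), h2]; simp [h0]
  rw [cosKer_of_pos (by simpa using h1) (by simpa using h2)]
  rfl

/-- The functional equation as a single convolution with `cosKer`. -/
lemma IsRLFracCosine.conv_eq {α : ℝ} (hα : α ∈ Ioo (1:ℝ) 2) {T : ℝ → X →L[ℝ] X}
    (hT : IsRLFracCosine α T) (x : X) {t s : ℝ} (ht : 0 < t) (hs : 0 < s) :
    IntegrableOn (fun q : ℝ × ℝ => cosKer α ((t, s) - q) • T q.1 (T q.2 x))
      (Ioc 0 t ×ˢ Ioc 0 s) ∧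
    ∫ q in Ioc 0 t ×ˢ Ioc 0 s, cosKer α ((t, s) - q) • T q.1 (T q.2 x)
      = Real.Gamma (2 - α) • ∫ σ in (0:ℝ)..(t + s), T σ x := by
  have hms : MeasurableSet (Ioc 0 t ×ˢ Ioc 0 s) := measurableSet_Ioc.prod measurableSet_Ioc
  have hB := integrableOn_kernel_bound hα ht hs
  have pos1 : ∀ q ∈ Ioc 0 t ×ˢ Ioc 0 s, 0 ≤ (t - q.1) ^ (1 - α) := fun q hq =>
    Real.rpow_nonneg (by linarith [hq.1.2]) _
  have pos2 : ∀ q ∈ Ioc 0 t ×ˢ Ioc 0 s, 0 ≤ (s - q.2) ^ (1 - α) := fun q hq =>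
    Real.rpow_nonneg (by linarith [hq.2.2]) _
  have i1 := hT.integrableOn_smul_comp x (g := fun q => (t - q.1) ^ (1 - α)) (by fun_prop) hB
    (fun q hq => by
      rw [abs_of_nonneg (pos1 q hq)]; linarith [pos2 q hq])
  have i2 := hT.integrableOn_smul_comp x (g := fun q => (s - q.2) ^ (1 - α)) (by fun_prop) hB
    (fun q hq => by
      rw [abs_of_nonneg (pos2 q hq)]; linarith [pos1 q hq])
  have i3 := hT.integrableOn_smul_comp x (g := fun q => (t + s - q.1 - q.2) ^ (1 - α))
    (by fun_prop) hB (fun q hq => by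
      rw [abs_of_nonneg (Real.rpow_nonneg (by linarith [hq.1.2, hq.2.2]) _)]
      have h1 := cosKer_sub hα.1 hq
      have h2 := cosKer_nonneg hα.1 ((t, s) - q)
      linarith)
  have hpt : ∀ q ∈ Ioc 0 t ×ˢ Ioc 0 s, ((t - q.1) ^ (1 - α)) • T q.1 (T q.2 x)
      + ((s - q.2) ^ (1 - α)) • T q.1 (T q.2 x)
      - ((t + s - q.1 - q.2) ^ (1 - α)) • T q.1 (T q.2 x)
      = cosKer α ((t, s) - q) • T q.1 (T q.2 x) := by
    intro q hq
    rw [cosKer_sub hα.1 hq, sub_smul, add_smul]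
  have i12 := i1.add i2
  refine ⟨(integrableOn_congr_fun hpt hms).1 (i12.sub i3), ?_⟩
  rw [← setIntegral_congr_fun hms hpt, hT.2.2 x t ht s hs]
  have hs1 := integral_sub i12 i3
  have hs2 := integral_add i1 i2
  simp only [Pi.add_apply] at hs1
  rw [hs1, hs2]
  simp only [intervalIntegral.integral_of_le ht.le, intervalIntegral.integral_of_le hs.le]
  rw [Measure.volume_eq_prod] at i1 i2 i3 ⊢
  rw [setIntegral_prod _ i1, setIntegral_prod _ i2, setIntegral_prod _ i3]

theorem IsRLFracCosine.commute {α : ℝ} (hα : α ∈ Ioo (1:ℝ) 2) {T : ℝ → X →L[ℝ] X}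
    (hT : IsRLFracCosine α T) (x : X) {t s : ℝ} (ht : 0 < t) (hs : 0 < s) :
    T t (T s x) = T s (T t x) := by
  have hsw : ∀ t s, IntegrableOn (fun q : ℝ × ℝ => T q.2 (T q.1 x)) (Ioc 0 t ×ˢ Ioc 0 s) := by
    intro t s
    have := (hT.integrableOn_comp hα x s t)
    rw [IntegrableOn, Measure.volume_eq_prod, ← Measure.prod_restrict] at this ⊢
    exact this.swap
  have hcsw : ContinuousOn (fun q : ℝ × ℝ => T q.2 (T q.1 x)) (Ioi 0 ×ˢ Ioi 0) :=
    (hT.continuousOn_comp x).comp continuous_swap.continuousOn fun q hq => ⟨hq.2, hq.1⟩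
  have key := eq_zero_of_cosKer_conv hα
    (K := fun q : ℝ × ℝ => T q.1 (T q.2 x) - T q.2 (T q.1 x))
    ((hT.continuousOn_comp x).sub hcsw)
    (fun N => (hT.integrableOn_comp hα x N N).sub (hsw N N)) ?_ ht hs
  · exact sub_eq_zero.1 key
  · intro t ht s hs
    obtain ⟨j1, e1⟩ := hT.conv_eq hα x ht hs
    obtain ⟨j2, e2⟩ := hT.conv_eq hα x hs ht
    have hfun : ∀ q : ℝ × ℝ, cosKer α ((s, t) - q.swap) • T q.swap.1 (T q.swap.2 x)
        = cosKer α ((t, s) - q) • T q.2 (T q.1 x) := by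
      intro q
      rw [← cosKer_swap ((t, s) - q)]
      rfl
    have j2' : IntegrableOn (fun q : ℝ × ℝ => cosKer α ((t, s) - q) • T q.2 (T q.1 x))
        (Ioc 0 t ×ˢ Ioc 0 s) := by
      rw [IntegrableOn, Measure.volume_eq_prod, ← Measure.prod_restrict] at j2 ⊢
      have := j2.swap
      refine this.congr (ae_of_all _ fun q => ?_)
      exact hfun q
    have e2' : ∫ q in Ioc 0 t ×ˢ Ioc 0 s, cosKer α ((t, s) - q) • T q.2 (T q.1 x)
        = Real.Gamma (2 - α) • ∫ σ in (0:ℝ)..(t + s), T σ x := by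
      rw [add_comm t s, ← e2]
      simp only [← hfun]
      exact setIntegral_prod_swap (μ := volume) (ν := volume) (Ioc 0 s) (Ioc 0 t)
        (fun q : ℝ × ℝ => cosKer α ((s, t) - q) • T q.1 (T q.2 x))
    simp only [smul_sub]
    rw [integral_sub j1 j2', e1, e2', sub_self]

lemma IsRLFracCosine.intervalIntegrable_generator {α : ℝ} (hα : α ∈ Ioo (1:ℝ) 2)
    {T : ℝ → X →L[ℝ] X} (hT : IsRLFracCosine α T) (x : X) {s : ℝ} (hs : 0 < s) :
    IntervalIntegrable (fun σ => (s - σ) ^ (2 - α - 1) •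
      (T σ x - (σ ^ (α - 2) / Real.Gamma (α - 1)) • x)) volume 0 s := by
  rw [intervalIntegrable_iff_integrableOn_Ioc_of_le hs.le]
  obtain ⟨M, hM0, hM⟩ := hT.exists_bound s
  have hexp : 2 - α - 1 = 1 - α := by ring
  rw [hexp]
  refine Integrable.mono' ((integrableOn_beta hα hs).const_mul
    ((M + |Real.Gamma (α - 1)|⁻¹) * ‖x‖)) ?_ ?_
  · refine AEStronglyMeasurable.smul (Measurable.aestronglyMeasurable (by fun_prop))
      (AEStronglyMeasurable.sub ?_ ?_)
    · exact ((hT.1 x).mono Ioc_subset_Ioi_self).aestronglyMeasurable measurableSet_Ioc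
    · exact AEStronglyMeasurable.smul (Measurable.aestronglyMeasurable (by fun_prop))
        aestronglyMeasurable_const
  · refine (ae_restrict_iff' measurableSet_Ioc).2 (ae_of_all _ fun σ hσ => ?_)
    have p1 : 0 ≤ (s - σ) ^ (1 - α) := Real.rpow_nonneg (by linarith [hσ.2]) _
    have p2 : 0 ≤ σ ^ (α - 2) := Real.rpow_nonneg hσ.1.le _
    rw [norm_smul, Real.norm_of_nonneg p1]
    have h1 : ‖T σ x‖ ≤ M * σ ^ (α - 2) * ‖x‖ := (T σ).le_of_opNorm_le (hM _ hσ) x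
    have h2 : ‖(σ ^ (α - 2) / Real.Gamma (α - 1)) • x‖
        = |Real.Gamma (α - 1)|⁻¹ * σ ^ (α - 2) * ‖x‖ := by
      rw [norm_smul, Real.norm_eq_abs, abs_div, abs_of_nonneg p2]; ring
    have h3 : ‖T σ x - (σ ^ (α - 2) / Real.Gamma (α - 1)) • x‖
        ≤ (M + |Real.Gamma (α - 1)|⁻¹) * ‖x‖ * σ ^ (α - 2) :=
      (norm_sub_le _ _).trans (by rw [h2]; linarith)
    calc _ ≤ (s - σ) ^ (1 - α) * ((M + |Real.Gamma (α - 1)|⁻¹) * ‖x‖ * σ ^ (α - 2)) :=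
          mul_le_mul_of_nonneg_left h3 p1
      _ = _ := by ring

end Cosine

/-- `T(t)` maps `D(A)` into `D(A)` and `T(t)Ax = A T(t)x` for `x ∈ D(A)`. -/
theorem rl_frac_cosine_generator_commutes
    {X : Type*} [NormedAddCommGroup X] [NormedSpace ℝ X] [CompleteSpace X]
    (α : ℝ) (hα : α ∈ Set.Ioo (1:ℝ) 2) (T : ℝ → X →L[ℝ] X)
    (hT : IsRLFracCosine α T) :
    ∀ t > (0:ℝ), ∀ x y : X, GenLimit α T x y → GenLimit α T (T t x) (T t y) := by
  intro t ht x y hxy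
  refine (((T t).continuous.tendsto y).comp hxy).congr' ?_
  filter_upwards [self_mem_nhdsWithin] with s hs
  simp only [Function.comp_apply, RLint, map_smul]
  congr 2
  rw [← ContinuousLinearMap.intervalIntegral_comp_comm _
    (hT.intervalIntegrable_generator hα x hs)]
  refine intervalIntegral.integral_congr_ae (ae_of_all _ fun σ hσ => ?_)
  rw [uIoc_of_le (le_of_lt hs)] at hσ
  simp only [map_smul, map_sub]
  rw [hT.commute hα x ht hσ.1]
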